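/- For every integer k ≥ 2, the following identity of formal power series in x over ℤ holds: (1 − 2x + x^{k+1})² · Σ_{n≥1} ( Σ_{w ∈ F_{n,k}} deg₂(w) ) xⁿ = 2·(4x − 7x² − 2x^{k} + x^{k+1} + 7x^{k+2} − x^{2k+1} − 2x^{2k+2}). In other words, the generating function for the total number of degree-2 vertices in all k-bonacci graphs on words of length n is D_k^{(2)}(x) = 2(4x − 7x² − 2x^k + x^{k+1} + 7x^{k+2} − x^{2k+1} − 2x^{2k+2})/(1 − 2x + x^{k+1})². -/

import Mathlib

open Finset

/-- Number of `1`s in a binary word. -/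
def wOnes (w : List Bool) : ℕ := w.count true

/-- Number of maximal runs (blocks) of consecutive `1`s in a binary word. -/
def wRuns (w : List Bool) : ℕ := w.count true - (w.zip w.tail).count (true, true)

/-- Indicator of `w₁ = c` (first letter). -/
def indHead (c : Bool) (w : List Bool) : ℕ := if w.head? = some c then 1 else 0

/-- Indicator of `wₙ = c` (last letter). -/
def indLast (c : Bool) (w : List Bool) : ℕ := if w.getLast? = some c then 1 else 0

/-- The set `F_{n,k}` of binary words of length `n` avoiding `k` consecutive `1`s. -/
def kbonWords (n k : ℕ) : Finset (Fin n → Bool) :=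
  Finset.univ.filter (fun w => ¬ (List.replicate k true <:+: List.ofFn w))

/-- Number of vertices of the `k`-bonacci graph: `ver(w) = 2n + 2 + s(w) + b(w)`. -/
def wVer (n : ℕ) (w : List Bool) : ℕ := 2 * n + 2 + wOnes w + wRuns w

/-- Number of degree-2 vertices: `deg₂(w) = 2 + 2b(w) + [w₁ = 0] + [wₙ = 0]`. -/
def wDeg2 (w : List Bool) : ℕ := 2 + 2 * wRuns w + indHead false w + indLast false w

/-- Number of degree-4 vertices: `deg₄(w) = 2b(w) − [w₁ = 1] − [wₙ = 1]`. -/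
def wDeg4 (w : List Bool) : ℕ := 2 * wRuns w - indHead true w - indLast true w

/-- Number of degree-3 vertices: `deg₃(w) = ver(w) − deg₂(w) − deg₄(w)`. -/
def wDeg3 (n : ℕ) (w : List Bool) : ℕ := wVer n w - wDeg2 w - wDeg4 w

/-!
A word avoiding `1^k` is either `1^j` or `1^j 0 w` with `j < k` and `w` again avoiding `1^k`, in a
unique way. Put `A = 1 + x + ⋯ + x^(k-1)`. For the number of words and for the total number of runs
of `1`s this decomposition gives the linear equations `N = A (1 + x N)` and
`R = (A - 1) (1 + x N) + x A R`, the runs counting one more for each `j > 0`. The words starting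
with `0` contribute `x N`, and so do the words ending with `0`, since reversal preserves the
avoidance of `1^k`. Hence `deg₂` has the generating function `2 (N + R + x N)`, from which the empty
word takes away `2`, and `(1 - x) (1 - x A) = 1 - 2 x + x^(k+1)` yields the denominator.
-/

section Words

lemma infix_append_cons_iff_of_notMem {α : Type*} {b : α} {l : List α} (hb : b ∉ l)
    (u v : List α) : l <:+: u ++ b :: v ↔ l <:+: u ∨ l <:+: v := by
  have prefix_eq_nil {t : List α} (ht : ∀ a ∈ t, a ∈ l) (h : t <+: b :: v) : t = [] := by
    rcases List.prefix_cons_iff.mp h with rfl | ⟨t', rfl, -⟩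
    · rfl
    · exact absurd (ht b List.mem_cons_self) hb
  constructor
  · intro h
    rcases List.infix_append_iff.mp h with hu | hv | ⟨l₁, l₂, rfl, h₁, h₂⟩
    · exact .inl hu
    · rcases List.infix_cons_iff.mp hv with hv | hv
      · obtain rfl := prefix_eq_nil (fun _ ↦ id) hv
        exact .inl List.nil_infix
      · exact .inr hv
    · obtain rfl := prefix_eq_nil (fun _ ↦ List.mem_append_right l₁) h₂
      exact .inl (by simpa using h₁.isInfix)
  · rintro (hu | hv)
    · exact List.infix_append_of_infix_left hu
    · exact List.infix_append_of_infix_right (List.infix_cons hv)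

lemma replicate_infix_replicate_iff {α : Type*} (a : α) (k j : ℕ) :
    List.replicate k a <:+: List.replicate j a ↔ k ≤ j := by
  simp [List.infix_replicate_iff]

lemma replicate_true_infix_append_cons_false_iff {j k : ℕ} (hj : j < k) (w : List Bool) :
    List.replicate k true <:+: List.replicate j true ++ false :: w ↔
      List.replicate k true <:+: w := by
  rw [infix_append_cons_iff_of_notMem (by simp), replicate_infix_replicate_iff]
  simp [hj]

lemma count_zip_le_count_left {α β : Type*} [DecidableEq α] [DecidableEq β] (a : α) (b : β)
    (u : List α) (v : List β) : (u.zip v).count (a, b) ≤ u.count a := by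
  induction u generalizing v with
  | nil => simp
  | cons c u ih =>
    cases v with
    | nil => simp
    | cons d v => grind

lemma wRuns_cons_false (w : List Bool) : wRuns (false :: w) = wRuns w := by
  cases w <;> simp [wRuns]

lemma wRuns_cons_true_cons_true (w : List Bool) :
    wRuns (true :: true :: w) = wRuns (true :: w) := by
  simp [wRuns]

lemma wRuns_cons_true {w : List Bool} (hw : w.head? ≠ some true) :
    wRuns (true :: w) = wRuns w + 1 := by
  match w with
  | [] => simp [wRuns]
  | true :: w => exact absurd rfl hw
  | false :: w =>
    have pairs_le := count_zip_le_count_left true true (false :: w) w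
    simpa [wRuns] using Nat.sub_add_comm pairs_le

lemma wRuns_replicate_true_append {w : List Bool} (hw : w.head? ≠ some true) (j : ℕ) :
    wRuns (List.replicate j true ++ w) = (if j = 0 then 0 else 1) + wRuns w := by
  induction j with
  | zero => simp
  | succ j ih =>
    cases j with
    | zero => simp [wRuns_cons_true hw, add_comm]
    | succ j => simpa [List.replicate_succ, wRuns_cons_true_cons_true] using ih

lemma indLast_eq_indHead_reverse (c : Bool) (w : List Bool) :
    indLast c w = indHead c w.reverse := by
  rw [indLast, indHead, List.head?_reverse]

end Words

section Series

open PowerSeries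

variable {R : Type*}

section Semiring

variable [Semiring R]

/-- The generating function `∑_w f(w) x^|w|` of a statistic `f` over all words in a finite
alphabet. -/
noncomputable def wordSeries {α : Type*} [Fintype α] (f : List α → R) : R⟦X⟧ :=
  .mk fun n ↦ ∑ w : Fin n → α, f (List.ofFn w)

lemma wordSeries_eq_cons {α : Type*} [Fintype α] (f : List α → R) :
    wordSeries f = C (f []) + X * ∑ a, wordSeries fun w ↦ f (a :: w) := by
  ext n
  cases n with
  | zero => simp [wordSeries]
  | succ n =>
    simp only [wordSeries, coeff_mk, map_add, map_sum, coeff_succ_C, zero_add, coeff_succ_X_mul]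
    rw [← (Fin.consEquiv fun _ ↦ α).sum_comp, Fintype.sum_prod_type]
    simp [Fin.consEquiv, List.ofFn_succ]

lemma wordSeries_eq_sum_first_false (f : List Bool → R) (m : ℕ) :
    wordSeries f =
      ∑ j ∈ range m, X ^ j * (C (f (List.replicate j true)) +
          X * wordSeries fun w ↦ f (List.replicate j true ++ false :: w)) +
        X ^ m * wordSeries fun w ↦ f (List.replicate m true ++ w) := by
  induction m with
  | zero => simp
  | succ m ih =>
    rw [ih, sum_range_succ, wordSeries_eq_cons fun w ↦ f (List.replicate m true ++ w)]
    simp only [Fintype.sum_bool, List.append_nil, List.replicate_succ', List.append_assoc,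
      List.singleton_append, pow_succ, mul_add, mul_assoc]
    abel

/-- The generating function `∑_w f(w) x^|w|` of a statistic `f` over the `k`-bonacci words,
the empty word included. -/
noncomputable def kbonSeries (k : ℕ) : (List Bool → R) →ₗ[R] R⟦X⟧ where
  toFun f := .mk fun n ↦ ∑ w ∈ kbonWords n k, f (List.ofFn w)
  map_add' f g := by ext n; simp [sum_add_distrib]
  map_smul' c f := by ext n; simp [mul_sum]

lemma coeff_kbonSeries (k n : ℕ) (f : List Bool → R) :
    coeff n (kbonSeries k f) = ∑ w ∈ kbonWords n k, f (List.ofFn w) := by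
  simp [kbonSeries]

lemma constantCoeff_kbonSeries {k : ℕ} (hk : 0 < k) (f : List Bool → R) :
    constantCoeff (kbonSeries k f) = f [] := by
  simp [← coeff_zero_eq_constantCoeff_apply, coeff_kbonSeries, kbonWords, hk.ne']

lemma kbonSeries_eq_wordSeries (k : ℕ) (f : List Bool → R) :
    kbonSeries k f = wordSeries fun w ↦ if List.replicate k true <:+: w then 0 else f w := by
  ext n
  simp [coeff_kbonSeries, wordSeries, kbonWords, sum_filter, ite_not]

lemma kbonSeries_eq_sum_first_false (k : ℕ) (f : List Bool → R) :
    kbonSeries k f =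
      ∑ j ∈ range k, X ^ j * (C (f (List.replicate j true)) +
        X * kbonSeries k fun w ↦ f (List.replicate j true ++ false :: w)) := by
  have series_after_full_run :
      (wordSeries fun w ↦ if List.replicate k true <:+: List.replicate k true ++ w then 0
        else f (List.replicate k true ++ w)) = 0 := by
    ext n
    simp [wordSeries, List.infix_append_left]
  rw [kbonSeries_eq_wordSeries, wordSeries_eq_sum_first_false _ k, series_after_full_run,
    mul_zero, add_zero]
  refine sum_congr rfl fun j hj ↦ ?_
  have hjk : j < k := mem_range.mp hj
  simp only [kbonSeries_eq_wordSeries, replicate_infix_replicate_iff,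
    replicate_true_infix_append_cons_false_iff hjk, if_neg hjk.not_ge]

lemma kbonSeries_zero (f : List Bool → R) : kbonSeries 0 f = 0 := by
  rw [kbonSeries_eq_sum_first_false, range_zero, sum_empty]

lemma ofFn_comp_rev {α : Type*} {n : ℕ} (w : Fin n → α) :
    List.ofFn (w ∘ Fin.rev) = (List.ofFn w).reverse := by
  refine List.ext_getElem (by simp) fun i _ _ ↦ ?_
  simp [Fin.rev, Nat.sub_sub, add_comm]

lemma kbonSeries_comp_reverse (k : ℕ) (f : List Bool → R) :
    (kbonSeries k fun w ↦ f w.reverse) = kbonSeries k f := by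
  ext n
  simp only [coeff_kbonSeries]
  have mem_iff_comp_rev_mem (w : Fin n → Bool) :
      w ∈ kbonWords n k ↔ w ∘ Fin.rev ∈ kbonWords n k := by
    have infix_reverse := List.reverse_infix (l₁ := List.replicate k true) (l₂ := List.ofFn w)
    simp [kbonWords, ofFn_comp_rev, ← infix_reverse]
  exact sum_equiv (Fin.revPerm.arrowCongr (.refl Bool)) mem_iff_comp_rev_mem
    fun w _ ↦ congrArg f (ofFn_comp_rev w).symm

lemma kbonSeries_indHead_false (k : ℕ) :
    (kbonSeries k fun w ↦ (indHead false w : R)) = X * kbonSeries k 1 := by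
  rcases k.eq_zero_or_pos with rfl | hk
  · rw [kbonSeries_zero, kbonSeries_zero, mul_zero]
  rw [kbonSeries_eq_sum_first_false, sum_eq_single_of_mem 0 (mem_range.mpr hk)]
  · simp [indHead, Pi.one_def]
  · intro j _ hj
    obtain ⟨i, rfl⟩ := Nat.exists_eq_succ_of_ne_zero hj
    have series_zero : (kbonSeries k fun _ ↦ (0 : R)) = 0 := map_zero _
    simp [indHead, List.replicate_succ, series_zero]

lemma kbonSeries_indLast_false (k : ℕ) :
    (kbonSeries k fun w ↦ (indLast false w : R)) = X * kbonSeries k 1 := by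
  simp only [indLast_eq_indHead_reverse]
  rw [kbonSeries_comp_reverse k fun w ↦ (indHead false w : R), kbonSeries_indHead_false]

lemma kbonSeries_one_eq (k : ℕ) :
    (kbonSeries k 1 : R⟦X⟧) = (∑ j ∈ range k, X ^ j) * (1 + X * kbonSeries k 1) := by
  conv_lhs => rw [kbonSeries_eq_sum_first_false]
  simp [sum_mul, Pi.one_def]

end Semiring

section CommSemiring

variable [CommSemiring R]

lemma kbonSeries_eq_of_additive {f : List Bool → R} {g : ℕ → R}
    (f_ones : ∀ j, f (List.replicate j true) = g j)
    (f_split : ∀ j w, f (List.replicate j true ++ false :: w) = g j + f w) (k : ℕ) :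
    kbonSeries k f =
      (∑ j ∈ range k, X ^ j * C (g j)) * (1 + X * kbonSeries k 1) +
        X * (∑ j ∈ range k, X ^ j) * kbonSeries k f := by
  have shift (c : R) : (kbonSeries k fun w ↦ c + f w) = C c * kbonSeries k 1 + kbonSeries k f := by
    rw [← smul_eq_C_mul, ← map_smul, ← map_add]
    congr 1
    funext w
    simp
  conv_lhs => rw [kbonSeries_eq_sum_first_false]
  simp only [f_ones, f_split, shift, mul_sum, sum_mul, ← sum_add_distrib]
  exact sum_congr rfl fun j _ ↦ by ring

lemma kbonSeries_wDeg2 (k : ℕ) :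
    (kbonSeries k fun w ↦ (wDeg2 w : R)) =
      2 * ((1 + X) * kbonSeries k 1 + kbonSeries k fun w ↦ (wRuns w : R)) := by
  have decomp : (fun w ↦ (wDeg2 w : R)) =
      2 • (1 : List Bool → R) + 2 • (fun w ↦ (wRuns w : R)) +
        (fun w ↦ (indHead false w : R)) + fun w ↦ (indLast false w : R) := by
    funext w
    simp [wDeg2]
  rw [decomp, map_add, map_add, map_add, map_nsmul, map_nsmul, kbonSeries_indHead_false,
    kbonSeries_indLast_false]
  ring

end CommSemiring

section CommRing

variable [CommRing R]

lemma kbonSeries_wRuns_eq {k : ℕ} (hk : 0 < k) :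
    (kbonSeries k fun w ↦ (wRuns w : R)) =
      (∑ j ∈ range k, X ^ j - 1) * (1 + X * kbonSeries k 1) +
        X * (∑ j ∈ range k, X ^ j) * kbonSeries k fun w ↦ (wRuns w : R) := by
  have wRuns_ones (j : ℕ) : wRuns (List.replicate j true) = if j = 0 then 0 else 1 := by
    simpa [wRuns] using wRuns_replicate_true_append (w := []) (by simp) j
  have wRuns_split (j : ℕ) (w : List Bool) :
      wRuns (List.replicate j true ++ false :: w) = (if j = 0 then 0 else 1) + wRuns w := by
    rw [wRuns_replicate_true_append (by simp), wRuns_cons_false]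
  have sum_nonempty : ∑ j ∈ range k, X ^ j * C (if j = 0 then 0 else 1) =
      ∑ j ∈ range k, X ^ j - (1 : R⟦X⟧) := by
    obtain ⟨m, rfl⟩ := Nat.exists_eq_succ_of_ne_zero hk.ne'
    simp [sum_range_succ']
  rw [← sum_nonempty]
  exact kbonSeries_eq_of_additive (by simp [wRuns_ones]) (by simp [wRuns_split]) k

lemma mul_kbonSeries_one (k : ℕ) :
    (1 - 2 * X + X ^ (k + 1)) * kbonSeries k 1 = (1 - X ^ k : R⟦X⟧) := by
  have geom := mul_neg_geom_sum (X : R⟦X⟧) k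
  linear_combination (1 - X) * kbonSeries_one_eq (R := R) k + (1 + X * kbonSeries k 1) * geom

lemma sq_mul_kbonSeries_wRuns {k : ℕ} (hk : 0 < k) :
    (1 - 2 * X + X ^ (k + 1)) ^ 2 * (kbonSeries k fun w ↦ (wRuns w : R)) =
      (1 - X) * (X - X ^ k) := by
  have geom := mul_neg_geom_sum (X : R⟦X⟧) k
  set A : R⟦X⟧ := ∑ j ∈ range k, X ^ j
  have denom : 1 - 2 * X + X ^ (k + 1) = (1 - X) * (1 - X * A) := by linear_combination X * geom
  have words : (1 - X * A) * (1 + X * kbonSeries k 1) = (1 : R⟦X⟧) := by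
    linear_combination X * kbonSeries_one_eq (R := R) k
  rw [denom]
  linear_combination (1 - X) ^ 2 * (1 - X * A) * kbonSeries_wRuns_eq (R := R) hk
    + (1 - X) ^ 2 * (A - 1) * words + (1 - X) * geom

lemma mk_sum_wDeg2_eq_kbonSeries_sub_two {k : ℕ} (hk : 0 < k) :
    (PowerSeries.mk fun n ↦ if n = 0 then 0 else ∑ w ∈ kbonWords n k, (wDeg2 (List.ofFn w) : R)) =
      (kbonSeries k fun w ↦ (wDeg2 w : R)) - 2 := by
  rw [show (2 : R⟦X⟧) = C 2 from (map_ofNat C 2).symm]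
  ext n
  cases n with
  | zero => simp [constantCoeff_kbonSeries hk, wDeg2, wRuns, indHead, indLast]
  | succ n => simp [coeff_kbonSeries, coeff_succ_C]

theorem total_degree2_gf_general {k : ℕ} (hk : 0 < k) :
    (1 - 2 * X + X ^ (k + 1) : R⟦X⟧) ^ 2 *
        (PowerSeries.mk fun n ↦
          if n = 0 then 0 else ∑ w ∈ kbonWords n k, (wDeg2 (List.ofFn w) : R)) =
      2 * (4 * X - 7 * X ^ 2 - 2 * X ^ k + X ^ (k + 1) + 7 * X ^ (k + 2) - X ^ (2 * k + 1) -
        2 * X ^ (2 * k + 2)) := by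
  rw [mk_sum_wDeg2_eq_kbonSeries_sub_two hk, kbonSeries_wDeg2]
  linear_combination 2 * (1 + X) * (1 - 2 * X + X ^ (k + 1)) * mul_kbonSeries_one (R := R) k +
    2 * sq_mul_kbonSeries_wRuns (R := R) hk

end CommRing

end Series

theorem total_degree2_gf (k : ℕ) (hk : 2 ≤ k) :
    (1 - 2 * PowerSeries.X + PowerSeries.X ^ (k + 1)) ^ 2
      * PowerSeries.mk (fun n =>
          if n = 0 then 0 else ∑ w ∈ kbonWords n k, (wDeg2 (List.ofFn w) : ℤ))
    = 2 * (PowerSeries.C (4 : ℤ) * PowerSeries.X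
        - PowerSeries.C (7 : ℤ) * PowerSeries.X ^ 2
        - PowerSeries.C (2 : ℤ) * PowerSeries.X ^ k
        + PowerSeries.X ^ (k + 1)
        + PowerSeries.C (7 : ℤ) * PowerSeries.X ^ (k + 2)
        - PowerSeries.X ^ (2 * k + 1)
        - PowerSeries.C (2 : ℤ) * PowerSeries.X ^ (2 * k + 2)) := by
  simpa only [map_ofNat] using total_degree2_gf_general (R := ℤ) (zero_lt_two.trans_le hk)
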